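/- arXiv:1105.5981 — 2 statements merged into one kernel-verified Lean document; each statement's English description precedes it below -/
import Mathlib

section
/- Let n ≥ 1 and let A_1 and A_2 be n×n complex matrices, each with determinant 1. Then for every integer N ≥ n there exist three nN × n(N−n+1) matrices U_1, U_2, V with orthonormal columns such that, for i = 1, 2, the n(N−n+1) × n(N−n+1) matrix U_iᴴ (I_N ⊗ A_i) V is upper triangular with all diagonal entries equal to 1. -/
open Matrix Kronecker

/-!
If `|det M| = 1`, the eigenvalues of `Mᴴ M` have product one, so `1` is a convex combination of them
and some unit vector `v` satisfies `‖M v‖ = 1`. Splitting off `v` gives, by induction, unitaries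
`U`, `V` for which `Uᴴ M V` is upper triangular with unit diagonal.

Applied to `A₁ A₂⁻¹` and followed by an RQ factorization, this makes `A₁` and `A₂` upper triangular
with a common diagonal `r` and a common right factor. Let window `t` consist of the coordinates `j`
in the copies `t + n - 1 - j` of `I_N ⊗ T`, for `T` upper triangular with diagonal `r`. Distinct
coordinates of a window lie in different copies, so each diagonal block of the restriction to the
windows is `diag r`, and triangularity of `T` kills the blocks below. Decomposing `diag r` once more
inside every window turns the diagonal into ones. All `t ≤ N - n` fit, so only `n - 1` copies' worth
of dimensions is lost.
-/

/-- Upper unitriangular matrices: the shape to which the encoders and decoders of a geometric mean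
decomposition (GMD) bring a channel matrix. -/
structure IsUnitUpperTriangular {ι R : Type*} [LT ι] [Zero R] [One R] (M : Matrix ι ι R) :
    Prop where
  isUpperTriangular : M.IsUpperTriangular
  diag_eq_one : ∀ i, M i i = 1

section Triangular

variable {R ι κ : Type*}

theorem mul_apply_self_of_isUpperTriangular [NonUnitalNonAssocSemiring R] [Fintype ι]
    [LinearOrder ι] {M N : Matrix ι ι R} (hM : M.IsUpperTriangular) (hN : N.IsUpperTriangular)
    (i : ι) : (M * N) i i = M i i * N i i := by
  rw [mul_apply, Finset.sum_eq_single_of_mem i (Finset.mem_univ i)]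
  intro j _ hj
  rcases hj.lt_or_gt with hlt | hgt
  · rw [hM hlt, zero_mul]
  · rw [hN hgt, mul_zero]

theorem IsUnitUpperTriangular.submatrix_orderIso [Zero R] [One R] [Preorder ι] [Preorder κ]
    {M : Matrix ι ι R} (hM : IsUnitUpperTriangular M) (e : κ ≃o ι) :
    IsUnitUpperTriangular (M.submatrix e e) where
  isUpperTriangular _ _ hij := hM.isUpperTriangular (e.strictMono hij)
  diag_eq_one i := hM.diag_eq_one (e i)

theorem isUnitUpperTriangular_lex [Zero R] [One R] [LT ι] [LT κ]
    {M : Matrix (ι × κ) (ι × κ) R}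
    (hzero : ∀ a c, c < a → M.submatrix (Prod.mk a) (Prod.mk c) = 0)
    (hdiag : ∀ a, IsUnitUpperTriangular (M.submatrix (Prod.mk a) (Prod.mk a))) :
    IsUnitUpperTriangular (M.submatrix (ofLex : ι ×ₗ κ → ι × κ) ofLex) where
  isUpperTriangular x y hxy := by
    obtain ⟨⟨a, b⟩, rfl⟩ := toLex.surjective x
    obtain ⟨⟨c, d⟩, rfl⟩ := toLex.surjective y
    rcases Prod.Lex.lt_iff.1 hxy with hca | ⟨hca, hdb⟩
    · exact congr_fun₂ (hzero a c hca) b d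
    · obtain rfl : c = a := hca
      exact (hdiag c).isUpperTriangular hdb
  diag_eq_one x := (hdiag (ofLex x).1).diag_eq_one (ofLex x).2

theorem isUnitUpperTriangular_of_submatrix_succ [NonAssocSemiring R] {n : ℕ}
    {M : Matrix (Fin (n + 1)) (Fin (n + 1)) R}
    (hcol : M *ᵥ Pi.single 0 1 = Pi.single 0 1)
    (htail : IsUnitUpperTriangular (M.submatrix Fin.succ Fin.succ)) :
    IsUnitUpperTriangular M := by
  rw [mulVec_single_one] at hcol
  constructor
  · intro i j hij
    obtain ⟨i, rfl⟩ := Fin.exists_succ_eq.2 (Fin.ne_zero_of_lt hij)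
    cases j using Fin.cases with
    | zero => simpa using congr_fun hcol i.succ
    | succ j => exact htail.isUpperTriangular (Fin.succ_lt_succ_iff.1 hij)
  · intro i
    cases i using Fin.cases with
    | zero => simpa using congr_fun hcol 0
    | succ i => exact htail.diag_eq_one i

theorem det_submatrix_succ_of_mulVec_single [CommRing R] {n : ℕ}
    {M : Matrix (Fin (n + 1)) (Fin (n + 1)) R}
    (hcol : M *ᵥ Pi.single 0 1 = Pi.single 0 1) :
    (M.submatrix Fin.succ Fin.succ).det = M.det := by
  rw [mulVec_single_one] at hcol
  have hzero (i : Fin (n + 1)) : M i 0 = (Pi.single 0 1 : Fin (n + 1) → R) i := congr_fun hcol i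
  simp [det_succ_column_zero, Fin.sum_univ_succ, hzero]

end Triangular

section BorderOne

variable {R : Type*} {n : ℕ}

/-- The block-diagonal matrix `diag(1, X)`. It is indexed by `Fin (n + 1)` rather than a sum type so
that a transformation of the trailing block composes with one of the whole matrix in an induction
on the size. -/
def borderOne [Zero R] [One R] (X : Matrix (Fin n) (Fin n) R) :
    Matrix (Fin (n + 1)) (Fin (n + 1)) R :=
  of (vecCons (vecCons 1 0) fun i => vecCons 0 (X i))

theorem borderOne_one [Zero R] [One R] :
    borderOne (1 : Matrix (Fin n) (Fin n) R) = 1 := by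
  ext i j
  cases i using Fin.cases <;> cases j using Fin.cases <;>
    simp [borderOne, one_apply, (Fin.succ_ne_zero _).symm]

theorem conjTranspose_borderOne [NonAssocSemiring R] [StarRing R]
    (X : Matrix (Fin n) (Fin n) R) : (borderOne X)ᴴ = borderOne Xᴴ := by
  ext i j
  cases i using Fin.cases <;> cases j using Fin.cases <;> simp [borderOne]

theorem borderOne_mul_borderOne [NonAssocSemiring R] (X Y : Matrix (Fin n) (Fin n) R) :
    borderOne X * borderOne Y = borderOne (X * Y) := by
  ext i j
  cases i using Fin.cases <;> cases j using Fin.cases <;>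
    simp [borderOne, mul_apply, Fin.sum_univ_succ]

theorem borderOne_mulVec_single [NonAssocSemiring R] (X : Matrix (Fin n) (Fin n) R) :
    borderOne X *ᵥ Pi.single 0 1 = Pi.single 0 1 := by
  rw [mulVec_single_one]
  ext i
  cases i using Fin.cases <;> simp [borderOne]

theorem submatrix_succ_borderOne_mul_mul_borderOne [NonAssocSemiring R]
    (X Y : Matrix (Fin n) (Fin n) R) (M : Matrix (Fin (n + 1)) (Fin (n + 1)) R) :
    (borderOne X * M * borderOne Y).submatrix Fin.succ Fin.succ =
      X * M.submatrix Fin.succ Fin.succ * Y := by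
  ext i j
  simp [borderOne, mul_apply, Fin.sum_univ_succ]

theorem borderOne_mem_unitaryGroup [CommRing R] [StarRing R] {X : Matrix (Fin n) (Fin n) R}
    (hX : X ∈ unitaryGroup (Fin n) R) : borderOne X ∈ unitaryGroup (Fin (n + 1)) R := by
  rw [mem_unitaryGroup_iff', star_eq_conjTranspose] at hX ⊢
  rw [conjTranspose_borderOne, borderOne_mul_borderOne, hX, borderOne_one]

end BorderOne

theorem star_mulVec_dotProduct_mulVec {m n R : Type*} [Fintype m] [Fintype n]
    [NonUnitalSemiring R] [StarRing R] (M : Matrix m n R) (v w : n → R) :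
    star (M *ᵥ v) ⬝ᵥ (M *ᵥ w) = star v ⬝ᵥ ((Mᴴ * M) *ᵥ w) := by
  rw [star_mulVec, ← dotProduct_mulVec, mulVec_mulVec]

section Unitary

variable {𝕜 ι : Type*} [RCLike 𝕜] [Fintype ι] [DecidableEq ι]

theorem norm_det_of_mem_unitaryGroup {U : Matrix ι ι 𝕜} (hU : U ∈ unitaryGroup ι 𝕜) :
    ‖U.det‖ = 1 :=
  CStarRing.norm_of_mem_unitary (det_of_mem_unitary hU)

theorem norm_det_conjTranspose_mul_mul {U V : Matrix ι ι 𝕜} (hU : U ∈ unitaryGroup ι 𝕜)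
    (hV : V ∈ unitaryGroup ι 𝕜) (M : Matrix ι ι 𝕜) : ‖(Uᴴ * M * V).det‖ = ‖M.det‖ := by
  rw [det_mul, det_mul, det_conjTranspose, norm_mul, norm_mul, norm_star,
    norm_det_of_mem_unitaryGroup hU, norm_det_of_mem_unitaryGroup hV, one_mul, mul_one]

theorem exists_unitary_mulVec_single_eq {v : ι → 𝕜} (hv : star v ⬝ᵥ v = 1) (i : ι) :
    ∃ U ∈ unitaryGroup ι 𝕜, U *ᵥ Pi.single i 1 = v := by
  have hunit : Orthonormal 𝕜 (({i} : Set ι).domRestrict fun _ => WithLp.toLp 2 v) := by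
    rw [orthonormal_iff_ite]
    rintro ⟨j, rfl⟩ ⟨k, rfl⟩
    rwa [if_pos rfl, EuclideanSpace.inner_eq_star_dotProduct, dotProduct_comm]
  obtain ⟨b, hb⟩ := hunit.exists_orthonormalBasis_extension_of_card_eq finrank_euclideanSpace
  refine ⟨_, (EuclideanSpace.basisFun ι 𝕜).toMatrix_orthonormalBasis_mem_unitary b, ?_⟩
  ext j
  simp [Module.Basis.toMatrix_apply, hb i rfl]

end Unitary

section QR

variable {𝕜 ι : Type*} [RCLike 𝕜] [Fintype ι] [LinearOrder ι] [LocallyFiniteOrderBot ι]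

theorem exists_unitary_conjTranspose_mul_isUpperTriangular (M : Matrix ι ι 𝕜) :
    ∃ Q ∈ unitaryGroup ι 𝕜, (Qᴴ * M).IsUpperTriangular := by
  let f : ι → EuclideanSpace 𝕜 ι := fun j => WithLp.toLp 2 (M.col j)
  obtain ⟨b, hb⟩ : ∃ b : OrthonormalBasis ι 𝕜 (EuclideanSpace 𝕜 ι),
      ∀ i j, j < i → inner 𝕜 (b i) (f j) = 0 :=
    ⟨InnerProductSpace.gramSchmidtOrthonormalBasis finrank_euclideanSpace f,
      fun _ _ => InnerProductSpace.gramSchmidtOrthonormalBasis_inv_triangular _ f⟩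
  refine ⟨_, (EuclideanSpace.basisFun ι 𝕜).toMatrix_orthonormalBasis_mem_unitary b, ?_⟩
  intro i j hij
  have hinner := hb i j hij
  rw [EuclideanSpace.inner_eq_star_dotProduct, dotProduct_comm] at hinner
  simpa [f, mul_apply, dotProduct, Module.Basis.toMatrix_apply] using hinner

theorem exists_unitary_mul_isUpperTriangular {M : Matrix ι ι 𝕜} (hM : IsUnit M.det) :
    ∃ V ∈ unitaryGroup ι 𝕜, (M * V).IsUpperTriangular := by
  obtain ⟨V, hV, hT⟩ := exists_unitary_conjTranspose_mul_isUpperTriangular M⁻¹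
  have hinv : (M * V) * (Vᴴ * M⁻¹) = 1 := by
    rw [Matrix.mul_assoc, ← Matrix.mul_assoc V, ← star_eq_conjTranspose,
      mem_unitaryGroup_iff.1 hV, Matrix.one_mul, mul_nonsing_inv _ hM]
  have : Invertible (Vᴴ * M⁻¹) := invertibleOfLeftInverse _ _ hinv
  refine ⟨V, hV, ?_⟩
  rw [← inv_eq_left_inv hinv]
  exact blockTriangular_inv_of_blockTriangular hT

end QR

section UnitVector

theorem exists_mem_stdSimplex_dotProduct_eq_one {ι : Type*} [Fintype ι] [Nonempty ι]
    {lam : ι → ℝ} (hpos : ∀ i, 0 < lam i) (hprod : ∏ i, lam i = 1) :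
    ∃ p ∈ stdSimplex ℝ ι, p ⬝ᵥ lam = 1 := by
  classical
  obtain ⟨i, hi⟩ : ∃ i, lam i ≤ 1 := by
    by_contra! h
    simpa [hprod] using Finset.prod_lt_prod_of_nonempty (fun _ _ => one_pos) (fun i _ => h i)
      Finset.univ_nonempty
  obtain ⟨j, hj⟩ : ∃ j, 1 ≤ lam j := by
    by_contra! h
    simpa [hprod] using Finset.prod_lt_prod_of_nonempty (fun i _ => hpos i) (fun i _ => h i)
      Finset.univ_nonempty
  obtain ⟨a, b, ha, hb, hab, hone⟩ : (1 : ℝ) ∈ segment ℝ (lam i) (lam j) := by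
    rw [segment_eq_Icc (hi.trans hj)]
    exact ⟨hi, hj⟩
  refine ⟨a • Pi.single i 1 + b • Pi.single j 1, convex_stdSimplex ℝ ι
    (single_mem_stdSimplex ℝ i) (single_mem_stdSimplex ℝ j) ha hb hab, ?_⟩
  simpa [add_dotProduct] using hone

variable {𝕜 ι : Type*} [RCLike 𝕜] [Fintype ι] [DecidableEq ι]

theorem exists_unit_dotProduct_mulVec_eq {H : Matrix ι ι 𝕜} (hH : H.IsHermitian) {p : ι → ℝ}
    (hp : p ∈ stdSimplex ℝ ι) :
    ∃ v : ι → 𝕜, star v ⬝ᵥ v = 1 ∧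
      star v ⬝ᵥ (H *ᵥ v) = ((p ⬝ᵥ hH.eigenvalues : ℝ) : 𝕜) := by
  let U : Matrix ι ι 𝕜 := hH.eigenvectorUnitary
  let w : ι → 𝕜 := fun i => (√(p i) : ℝ)
  have hw (i : ι) : star (w i) * w i = (p i : 𝕜) := by
    simp only [w, RCLike.star_def, RCLike.conj_ofReal]
    rw [← RCLike.ofReal_mul, Real.mul_self_sqrt (hp.1 i)]
  have hU : Uᴴ * U = 1 := mem_unitaryGroup_iff'.1 hH.eigenvectorUnitary.2
  have hD : Uᴴ * H * U = diagonal (RCLike.ofReal ∘ hH.eigenvalues) := by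
    simpa [Unitary.conjStarAlgAut_apply, star_eq_conjTranspose] using
      hH.conjStarAlgAut_star_eigenvectorUnitary
  refine ⟨U *ᵥ w, ?_, ?_⟩
  · rw [star_mulVec_dotProduct_mulVec, hU, one_mulVec]
    simp only [dotProduct, Pi.star_apply, hw]
    rw [← RCLike.ofReal_sum, hp.2, RCLike.ofReal_one]
  · rw [star_mulVec, ← dotProduct_mulVec, mulVec_mulVec, mulVec_mulVec, hD]
    simp only [dotProduct, Pi.star_apply, mulVec_diagonal, Function.comp_apply]
    push_cast
    refine Finset.sum_congr rfl fun i _ => ?_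
    rw [mul_left_comm, hw, mul_comm]

open scoped ComplexOrder in
theorem exists_unit_mulVec_unit [Nonempty ι] {M : Matrix ι ι 𝕜} (hM : ‖M.det‖ = 1) :
    ∃ v : ι → 𝕜, star v ⬝ᵥ v = 1 ∧ star (M *ᵥ v) ⬝ᵥ (M *ᵥ v) = 1 := by
  have hunit : IsUnit M := by
    rw [isUnit_iff_isUnit_det, isUnit_iff_ne_zero, ← norm_ne_zero_iff, hM]
    exact one_ne_zero
  have hH : (Mᴴ * M).PosDef :=
    PosDef.conjTranspose_mul_self M (mulVec_injective_of_isUnit hunit)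
  have hprod : ∏ i, hH.1.eigenvalues i = 1 := by
    have hdet : (Mᴴ * M).det = 1 := by
      rw [det_mul, det_conjTranspose, RCLike.star_def, RCLike.conj_mul, hM]
      simp
    rw [hH.1.det_eq_prod_eigenvalues] at hdet
    exact_mod_cast hdet
  obtain ⟨p, hp, hsum⟩ := exists_mem_stdSimplex_dotProduct_eq_one hH.eigenvalues_pos hprod
  obtain ⟨v, hv, hquad⟩ := exists_unit_dotProduct_mulVec_eq hH.1 hp
  refine ⟨v, hv, ?_⟩
  rw [star_mulVec_dotProduct_mulVec, hquad, hsum, RCLike.ofReal_one]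

end UnitVector

section GMD

variable {𝕜 : Type*} [RCLike 𝕜]

theorem exists_unitary_conjTranspose_mul_mul_mulVec_single {ι : Type*} [Fintype ι] [DecidableEq ι]
    {M : Matrix ι ι 𝕜} (hM : ‖M.det‖ = 1) (i : ι) :
    ∃ U ∈ unitaryGroup ι 𝕜, ∃ V ∈ unitaryGroup ι 𝕜,
      (Uᴴ * M * V) *ᵥ Pi.single i 1 = Pi.single i 1 := by
  have : Nonempty ι := ⟨i⟩
  obtain ⟨v, hv, hMv⟩ := exists_unit_mulVec_unit hM
  obtain ⟨V, hV, hVi⟩ := exists_unitary_mulVec_single_eq hv i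
  obtain ⟨U, hU, hUi⟩ := exists_unitary_mulVec_single_eq hMv i
  refine ⟨U, hU, V, hV, ?_⟩
  rw [← mulVec_mulVec, ← mulVec_mulVec, hVi, ← hUi, mulVec_mulVec, ← star_eq_conjTranspose,
    mem_unitaryGroup_iff'.1 hU, one_mulVec]

theorem exists_unitary_isUnitUpperTriangular {n : ℕ} {M : Matrix (Fin n) (Fin n) 𝕜}
    (hM : ‖M.det‖ = 1) :
    ∃ U ∈ unitaryGroup (Fin n) 𝕜, ∃ V ∈ unitaryGroup (Fin n) 𝕜,
      IsUnitUpperTriangular (Uᴴ * M * V) := by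
  induction n with
  | zero => exact ⟨1, one_mem _, 1, one_mem _, fun i => i.elim0, fun i => i.elim0⟩
  | succ n ih =>
    obtain ⟨U, hU, V, hV, hcol⟩ := exists_unitary_conjTranspose_mul_mul_mulVec_single hM 0
    have htail : ‖((Uᴴ * M * V).submatrix Fin.succ Fin.succ).det‖ = 1 := by
      rw [det_submatrix_succ_of_mulVec_single hcol, norm_det_conjTranspose_mul_mul hU hV, hM]
    obtain ⟨U', hU', V', hV', htri⟩ := ih htail
    have hprod : (U * borderOne U')ᴴ * M * (V * borderOne V') =
        borderOne U'ᴴ * (Uᴴ * M * V) * borderOne V' := by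
      simp only [conjTranspose_mul, conjTranspose_borderOne, Matrix.mul_assoc]
    refine ⟨U * borderOne U', mul_mem hU (borderOne_mem_unitaryGroup hU'),
      V * borderOne V', mul_mem hV (borderOne_mem_unitaryGroup hV'), ?_⟩
    rw [hprod]
    apply isUnitUpperTriangular_of_submatrix_succ
    · rw [← mulVec_mulVec, ← mulVec_mulVec, borderOne_mulVec_single, hcol,
        borderOne_mulVec_single]
    · rwa [submatrix_succ_borderOne_mul_mul_borderOne]

theorem exists_unitary_isUpperTriangular_diag_eq {n : ℕ} {A B : Matrix (Fin n) (Fin n) 𝕜}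
    (hB : B.det ≠ 0) (hAB : ‖A.det‖ = ‖B.det‖) :
    ∃ Q ∈ unitaryGroup (Fin n) 𝕜, ∃ P ∈ unitaryGroup (Fin n) 𝕜, ∃ V ∈ unitaryGroup (Fin n) 𝕜,
      (Qᴴ * A * V).IsUpperTriangular ∧ (Pᴴ * B * V).IsUpperTriangular ∧
        (Qᴴ * A * V).diag = (Pᴴ * B * V).diag := by
  have hratio : ‖(A * B⁻¹).det‖ = 1 := by
    rw [det_mul, det_nonsing_inv, Ring.inverse_eq_inv', norm_mul, norm_inv, hAB,
      mul_inv_cancel₀ (norm_ne_zero_iff.2 hB)]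
  obtain ⟨Q, hQ, P, hP, hT⟩ := exists_unitary_isUnitUpperTriangular hratio
  have hPB : IsUnit (Pᴴ * B).det := by
    rwa [← Matrix.mul_one (Pᴴ * B), isUnit_iff_ne_zero, ← norm_ne_zero_iff,
      norm_det_conjTranspose_mul_mul hP (one_mem _), norm_ne_zero_iff]
  obtain ⟨V, hV, hR⟩ := exists_unitary_mul_isUpperTriangular hPB
  have hfactor : Qᴴ * A * V = (Qᴴ * (A * B⁻¹) * P) * (Pᴴ * B * V) := by
    calc Qᴴ * A * V = Qᴴ * A * (B⁻¹ * B) * V := by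
          rw [nonsing_inv_mul _ hB.isUnit, Matrix.mul_one]
      _ = Qᴴ * A * B⁻¹ * (P * star P) * B * V := by
          rw [mem_unitaryGroup_iff.1 hP, Matrix.mul_one]
          simp only [Matrix.mul_assoc]
      _ = (Qᴴ * (A * B⁻¹) * P) * (Pᴴ * B * V) := by
          simp only [Matrix.mul_assoc, star_eq_conjTranspose]
  refine ⟨Q, hQ, P, hP, V, hV, ?_, hR, ?_⟩
  · rw [hfactor]
    exact hT.isUpperTriangular.mul hR
  · ext i
    rw [hfactor, diag_apply, mul_apply_self_of_isUpperTriangular hT.isUpperTriangular hR,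
      hT.diag_eq_one, one_mul, diag_apply]

end GMD

section Window

variable {R m m' κ κ' : Type*} {n L N : ℕ}

theorem submatrix_one_kronecker_mul_mul_one_kronecker {ι : Type*} [CommSemiring R] [Fintype ι]
    [DecidableEq ι] [Fintype m] [Fintype m'] (X : Matrix κ m R) (M : Matrix (ι × m) (ι × m') R)
    (Y : Matrix m' κ' R) (a c : ι) :
    (((1 : Matrix ι ι R) ⊗ₖ X) * M * ((1 : Matrix ι ι R) ⊗ₖ Y)).submatrix
      (Prod.mk a) (Prod.mk c) = X * M.submatrix (Prod.mk a) (Prod.mk c) * Y := by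
  ext b d
  simp [mul_apply, Fintype.sum_prod_type, one_apply, Finset.sum_ite_irrel]

theorem one_kronecker_conjTranspose_mul_mul {ι : Type*} [CommSemiring R] [StarRing R] [Fintype ι]
    [DecidableEq ι] [Fintype m] [Fintype m'] (Q : Matrix m κ R) (A : Matrix m m' R)
    (P : Matrix m' κ' R) :
    (1 : Matrix ι ι R) ⊗ₖ (Qᴴ * A * P) =
      ((1 : Matrix ι ι R) ⊗ₖ Q)ᴴ * ((1 : Matrix ι ι R) ⊗ₖ A) * ((1 : Matrix ι ι R) ⊗ₖ P) := by
  rw [conjTranspose_kronecker, conjTranspose_one, ← mul_kronecker_mul, ← mul_kronecker_mul,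
    Matrix.one_mul, Matrix.one_mul]

theorem conjTranspose_submatrix_mul_mul_submatrix [NonUnitalSemiring R] [Star R] [Fintype m]
    [Fintype m'] {ι : Type*} (U : Matrix m κ R) (M : Matrix m m' R) (V : Matrix m' κ' R)
    (f : ι → κ) (g : ι → κ') :
    (U.submatrix id f)ᴴ * M * V.submatrix id g = (Uᴴ * M * V).submatrix f g :=
  rfl

/-- Position in the `N`-fold extension of coordinate `j` of window `t`. Window `t` takes one
coordinate from each of the copies `t, …, t + n - 1`, in decreasing order. -/
def windowIndex (h : L + n ≤ N + 1) (x : Fin L × Fin n) : Fin N × Fin n :=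
  (⟨x.1 + x.2.rev, by omega⟩, x.2)

theorem windowIndex_injective (h : L + n ≤ N + 1) : Function.Injective (windowIndex h) := by
  rintro ⟨t, j⟩ ⟨t', j'⟩ heq
  simp only [windowIndex, Prod.mk.injEq, Fin.mk.injEq] at heq
  obtain ⟨hcopy, rfl⟩ := heq
  obtain rfl : t = t' := Fin.ext (by omega)
  rfl

/-- The restriction of `I_N ⊗ T` to the coordinates of the `L` windows, indexed by window and
coordinate. For upper triangular `T` it is block upper triangular with `diag T` in every diagonal
block. -/
def windowCompression [MulZeroOneClass R] (h : L + n ≤ N + 1) (T : Matrix (Fin n) (Fin n) R) :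
    Matrix (Fin L × Fin n) (Fin L × Fin n) R :=
  ((1 : Matrix (Fin N) (Fin N) R) ⊗ₖ T).submatrix (windowIndex h) (windowIndex h)

theorem windowCompression_apply [MulZeroOneClass R] (h : L + n ≤ N + 1)
    (T : Matrix (Fin n) (Fin n) R) (a c : Fin L) (i j : Fin n) :
    windowCompression h T (a, i) (c, j) =
      if (a + i.rev : ℕ) = c + j.rev then T i j else 0 := by
  simp [windowCompression, windowIndex, one_apply]

theorem windowCompression_one [MulZeroOneClass R] (h : L + n ≤ N + 1) :
    windowCompression h (1 : Matrix (Fin n) (Fin n) R) = 1 := by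
  rw [windowCompression, one_kronecker_one, submatrix_one _ (windowIndex_injective h)]

theorem windowCompression_submatrix_of_lt [MulZeroOneClass R] (h : L + n ≤ N + 1)
    {T : Matrix (Fin n) (Fin n) R} (hT : T.IsUpperTriangular) {a c : Fin L} (hca : c < a) :
    (windowCompression h T).submatrix (Prod.mk a) (Prod.mk c) = 0 := by
  ext i j
  rw [submatrix_apply, windowCompression_apply, Matrix.zero_apply, ite_eq_right_iff]
  intro hcopy
  have hji : j < i := by
    rw [← Fin.rev_lt_rev]
    omega
  exact hT hji

theorem windowCompression_submatrix_self [MulZeroOneClass R] (h : L + n ≤ N + 1)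
    (T : Matrix (Fin n) (Fin n) R) (a : Fin L) :
    (windowCompression h T).submatrix (Prod.mk a) (Prod.mk a) = diagonal T.diag := by
  ext i j
  rw [submatrix_apply, windowCompression_apply, diagonal_apply]
  rcases eq_or_ne i j with rfl | hij
  · simp
  · rw [if_neg hij, if_neg]
    rwa [Nat.add_left_cancel_iff, Fin.val_inj, Fin.rev_inj]

/-- The matrix `(I_N ⊗ Q) S (I_L ⊗ X)`, where `S` selects the coordinates `windowIndex`: the common
shape of the encoder and the decoders. -/
def windowMatrix [CommSemiring R] (h : L + n ≤ N + 1) (Q : Matrix m (Fin n) R)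
    (X : Matrix (Fin n) κ R) : Matrix (Fin N × m) (Fin L × κ) R :=
  ((1 : Matrix (Fin N) (Fin N) R) ⊗ₖ Q).submatrix id (windowIndex h) *
    ((1 : Matrix (Fin L) (Fin L) R) ⊗ₖ X)

variable [CommSemiring R] [StarRing R] [Fintype m]

theorem windowMatrix_conjTranspose_mul_mul [Fintype m'] (h : L + n ≤ N + 1)
    (Q : Matrix m (Fin n) R) (X : Matrix (Fin n) κ R) (A : Matrix m m' R)
    (P : Matrix m' (Fin n) R) (Y : Matrix (Fin n) κ' R) :
    (windowMatrix h Q X)ᴴ * ((1 : Matrix (Fin N) (Fin N) R) ⊗ₖ A) * windowMatrix h P Y =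
      ((1 : Matrix (Fin L) (Fin L) R) ⊗ₖ Xᴴ) * windowCompression h (Qᴴ * A * P) *
        ((1 : Matrix (Fin L) (Fin L) R) ⊗ₖ Y) := by
  rw [windowCompression, one_kronecker_conjTranspose_mul_mul,
    ← conjTranspose_submatrix_mul_mul_submatrix, windowMatrix, windowMatrix, conjTranspose_mul,
    conjTranspose_kronecker 1 X, conjTranspose_one]
  simp only [Matrix.mul_assoc]

theorem windowMatrix_conjTranspose_mul_self [DecidableEq κ] (h : L + n ≤ N + 1)
    {Q : Matrix m (Fin n) R} {X : Matrix (Fin n) κ R} (hQ : Qᴴ * Q = 1) (hX : Xᴴ * X = 1) :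
    (windowMatrix h Q X)ᴴ * windowMatrix h Q X = 1 := by
  classical
  have hprod := windowMatrix_conjTranspose_mul_mul h Q X 1 Q X
  rwa [one_kronecker_one, Matrix.mul_one, Matrix.mul_one, hQ, windowCompression_one,
    Matrix.mul_one, ← mul_kronecker_mul, hX, Matrix.one_mul, one_kronecker_one] at hprod

theorem isUnitUpperTriangular_windowMatrix [Fintype m'] [LT κ] (h : L + n ≤ N + 1)
    {Q : Matrix m (Fin n) R} {A : Matrix m m' R} {P : Matrix m' (Fin n) R}
    {X Y : Matrix (Fin n) κ R} (hT : (Qᴴ * A * P).IsUpperTriangular)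
    (hdiag : IsUnitUpperTriangular (Xᴴ * diagonal (Qᴴ * A * P).diag * Y)) :
    IsUnitUpperTriangular (((windowMatrix h Q X)ᴴ * ((1 : Matrix (Fin N) (Fin N) R) ⊗ₖ A) *
      windowMatrix h P Y).submatrix (ofLex : Fin L ×ₗ κ → Fin L × κ) ofLex) := by
  rw [windowMatrix_conjTranspose_mul_mul]
  apply isUnitUpperTriangular_lex
  · intro a c hca
    rw [submatrix_one_kronecker_mul_mul_one_kronecker, windowCompression_submatrix_of_lt h hT hca,
      Matrix.mul_zero, Matrix.zero_mul]
  · intro a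
    rwa [submatrix_one_kronecker_mul_mul_one_kronecker, windowCompression_submatrix_self]

end Window

theorem exists_isometry_isUnitUpperTriangular_lex {𝕜 : Type*} [RCLike 𝕜] {n L N : ℕ}
    (h : L + n ≤ N + 1) {A₁ A₂ : Matrix (Fin n) (Fin n) 𝕜}
    (h₁ : ‖A₁.det‖ = 1) (h₂ : ‖A₂.det‖ = 1) :
    ∃ U₁ U₂ V : Matrix (Fin N × Fin n) (Fin L × Fin n) 𝕜,
      U₁ᴴ * U₁ = 1 ∧ U₂ᴴ * U₂ = 1 ∧ Vᴴ * V = 1 ∧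
      IsUnitUpperTriangular ((U₁ᴴ * ((1 : Matrix (Fin N) (Fin N) 𝕜) ⊗ₖ A₁) * V).submatrix
        (ofLex : Fin L ×ₗ Fin n → Fin L × Fin n) ofLex) ∧
      IsUnitUpperTriangular ((U₂ᴴ * ((1 : Matrix (Fin N) (Fin N) 𝕜) ⊗ₖ A₂) * V).submatrix
        (ofLex : Fin L ×ₗ Fin n → Fin L × Fin n) ofLex) := by
  obtain ⟨Q, hQ, P, hP, V, hV, hT₁, hT₂, hdiag⟩ :=
    exists_unitary_isUpperTriangular_diag_eq (norm_ne_zero_iff.1 (h₂ ▸ one_ne_zero))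
      (h₁.trans h₂.symm)
  have hdet : ‖(diagonal (Pᴴ * A₂ * V).diag).det‖ = 1 := by
    simp only [det_diagonal, diag_apply]
    rw [← det_of_isUpperTriangular hT₂, norm_det_conjTranspose_mul_mul hP hV, h₂]
  obtain ⟨X, hX, Y, hY, hXY⟩ := exists_unitary_isUnitUpperTriangular hdet
  rw [mem_unitaryGroup_iff'] at hQ hP hV hX hY
  exact ⟨windowMatrix h Q X, windowMatrix h P X, windowMatrix h V Y,
    windowMatrix_conjTranspose_mul_self h hQ hX, windowMatrix_conjTranspose_mul_self h hP hX,
    windowMatrix_conjTranspose_mul_self h hV hY,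
    isUnitUpperTriangular_windowMatrix h hT₁ (hdiag ▸ hXY),
    isUnitUpperTriangular_windowMatrix h hT₂ hXY⟩

theorem nearly_optimal_twoGMD_general {𝕜 : Type*} [RCLike 𝕜] {n N : ℕ} (hN : n ≤ N)
    {A₁ A₂ : Matrix (Fin n) (Fin n) 𝕜} (h₁ : ‖A₁.det‖ = 1) (h₂ : ‖A₂.det‖ = 1) :
    ∃ U₁ U₂ V : Matrix (Fin N × Fin n) (Fin (n * (N - n + 1))) 𝕜,
      U₁ᴴ * U₁ = 1 ∧ U₂ᴴ * U₂ = 1 ∧ Vᴴ * V = 1 ∧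
      IsUnitUpperTriangular (U₁ᴴ * ((1 : Matrix (Fin N) (Fin N) 𝕜) ⊗ₖ A₁) * V) ∧
      IsUnitUpperTriangular (U₂ᴴ * ((1 : Matrix (Fin N) (Fin N) 𝕜) ⊗ₖ A₂) * V) := by
  obtain ⟨U₁, U₂, V, hU₁, hU₂, hV, hT₁, hT₂⟩ := exists_isometry_isUnitUpperTriangular_lex
    (show N - n + 1 + n ≤ N + 1 by omega) h₁ h₂
  let e : Fin (n * (N - n + 1)) ≃o Fin (N - n + 1) ×ₗ Fin n :=
    Fintype.orderIsoFinOfCardEq _ (by simp [mul_comm])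
  have isometry_submatrix {U : Matrix (Fin N × Fin n) (Fin (N - n + 1) × Fin n) 𝕜}
      (hU : Uᴴ * U = 1) : (U.submatrix id (ofLex ∘ e))ᴴ * U.submatrix id (ofLex ∘ e) = 1 := by
    have hprod := conjTranspose_submatrix_mul_mul_submatrix U 1 U (ofLex ∘ e) (ofLex ∘ e)
    rwa [Matrix.mul_one, Matrix.mul_one, hU,
      submatrix_one _ (ofLex.injective.comp e.injective)] at hprod
  exact ⟨U₁.submatrix id (ofLex ∘ e), U₂.submatrix id (ofLex ∘ e), V.submatrix id (ofLex ∘ e),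
    isometry_submatrix hU₁, isometry_submatrix hU₂, isometry_submatrix hV,
    hT₁.submatrix_orderIso e, hT₂.submatrix_orderIso e⟩

/-- Nearly-optimal 2-GMD: for unit-determinant complex `n × n` matrices
`A₁, A₂` and any `N ≥ n`, there are `nN × n(N - n + 1)` matrices `U₁, U₂, V`
with orthonormal columns simultaneously triangularizing the block-diagonal
extensions `I_N ⊗ Aᵢ` with all diagonal entries equal to `1`. -/
theorem nearly_optimal_twoGMD (n : ℕ) (hn : 1 ≤ n)
    (A₁ A₂ : Matrix (Fin n) (Fin n) ℂ) (h₁ : A₁.det = 1) (h₂ : A₂.det = 1)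
    (N : ℕ) (hN : n ≤ N) :
    ∃ U₁ U₂ V : Matrix (Fin N × Fin n) (Fin (n * (N - n + 1))) ℂ,
      U₁ᴴ * U₁ = 1 ∧ U₂ᴴ * U₂ = 1 ∧ Vᴴ * V = 1 ∧
      (∀ k l : Fin (n * (N - n + 1)), l < k →
        (U₁ᴴ * ((1 : Matrix (Fin N) (Fin N) ℂ) ⊗ₖ A₁) * V) k l = 0) ∧
      (∀ k : Fin (n * (N - n + 1)),
        (U₁ᴴ * ((1 : Matrix (Fin N) (Fin N) ℂ) ⊗ₖ A₁) * V) k k = 1) ∧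
      (∀ k l : Fin (n * (N - n + 1)), l < k →
        (U₂ᴴ * ((1 : Matrix (Fin N) (Fin N) ℂ) ⊗ₖ A₂) * V) k l = 0) ∧
      (∀ k : Fin (n * (N - n + 1)),
        (U₂ᴴ * ((1 : Matrix (Fin N) (Fin N) ℂ) ⊗ₖ A₂) * V) k k = 1) := by
  obtain ⟨U₁, U₂, V, hU₁, hU₂, hV, hT₁, hT₂⟩ :=
    nearly_optimal_twoGMD_general hN (h₁ ▸ norm_one) (h₂ ▸ norm_one)
  exact ⟨U₁, U₂, V, hU₁, hU₂, hV, fun _ _ h => hT₁.isUpperTriangular h, hT₁.diag_eq_one,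
    fun _ _ h => hT₂.isUpperTriangular h, hT₂.diag_eq_one⟩
end

section
/- For real R > 0 let x = −(1 − 2^{−R/6}) √(1 + 2^{R/6} + 2^{R/3}), and let T_1 be the real 2×2 upper-triangular matrix with rows (2^{−R/12}, x) and (0, 2^{R/12}), and T_2 the diagonal matrix diag(2^{−R/12}, 2^{R/12}). Then there exist complex 2×2 unitary matrices U_1, U_2, V such that U_iᴴ T_i V is upper triangular with both diagonal entries equal to 1 for i = 1, 2, if and only if R ≤ 6 log₂((3 + √5)/2). -/
open Matrix

/-!
For `2 × 2` matrices of determinant one, a joint triangularization with unit diagonals exists iff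
some unit vector `v` (the first column of `V`) keeps unit length under every `T i`: completing `v`
and `T i v` to unitary matrices of determinant one makes the first column of `Uᴴ T V` equal to
`e₀`, and then the determinant forces the last diagonal entry to be one.

For `T₁ = !![a, x; 0, b]` and `T₂ = diag(a, b)` with `ab = 1`, `|b| ≠ 1`, put `v = (b u, w)`. The
length conditions say that `|u| = |w| = |u + x w|`, with `w` fixed by normalization, so that
`c = u / w` lies on the unit circle together with `c + x`. Such a `c` exists iff `|x| ≤ 2`.

With `y = 2 ^ (R / 6)`, `x ^ 2 - 4 = (y ^ 2 - 3 y + 1) ((y + 1) / y) ^ 2`, and the larger root of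
the quadratic factor is `(3 + √5) / 2`.
-/

section JointTriangularization

/-- Upper triangular matrices with ones on the diagonal. -/
def IsUnitUpperTriangular_s11 {n α : Type*} [LT n] [Zero α] [One α] (M : Matrix n n α) : Prop :=
  (∀ k l, l < k → M k l = 0) ∧ ∀ k, M k k = 1

/-- The family `T` has an exact joint geometric mean decomposition: a common `V` on the right and
individual `U`s on the left, all unitary, bring every `T i` to triangular form with constant
diagonal. That diagonal is normalized to one, as is appropriate for factors of determinant one. -/
def HasJointGMD {ι n α : Type*} [LT n] [Fintype n] [DecidableEq n] [Semiring α] [StarRing α]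
    (T : ι → Matrix n n α) : Prop :=
  ∃ V : Matrix n n α, Vᴴ * V = 1 ∧
    ∀ i, ∃ U : Matrix n n α, Uᴴ * U = 1 ∧ IsUnitUpperTriangular_s11 (Uᴴ * T i * V)

theorem hasJointGMD_pair_iff {n α : Type*} [LT n] [Fintype n] [DecidableEq n] [Semiring α]
    [StarRing α] {S T : Matrix n n α} :
    HasJointGMD ![S, T] ↔ ∃ U₁ U₂ V : Matrix n n α,
      U₁ᴴ * U₁ = 1 ∧ U₂ᴴ * U₂ = 1 ∧ Vᴴ * V = 1 ∧
      (∀ k l, l < k → (U₁ᴴ * S * V) k l = 0) ∧ (∀ k, (U₁ᴴ * S * V) k k = 1) ∧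
      (∀ k l, l < k → (U₂ᴴ * T * V) k l = 0) ∧ (∀ k, (U₂ᴴ * T * V) k k = 1) := by
  simp only [HasJointGMD, IsUnitUpperTriangular_s11, Fin.forall_fin_two, cons_val_zero, cons_val_one]
  constructor
  · rintro ⟨V, hV, ⟨U₁, hU₁, hS, hS'⟩, U₂, hU₂, hT, hT'⟩
    exact ⟨U₁, U₂, V, hU₁, hU₂, hV, hS, hS', hT, hT'⟩
  · rintro ⟨U₁, U₂, V, hU₁, hU₂, hV, hS, hS', hT, hT'⟩
    exact ⟨V, hV, ⟨U₁, hU₁, hS, hS'⟩, U₂, hU₂, hT, hT'⟩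

theorem star_mulVec_dotProduct_mulVec_self {m n α : Type*} [Fintype m] [Fintype n] [DecidableEq n]
    [Semiring α] [StarRing α] {U : Matrix m n α} (hU : Uᴴ * U = 1) (v : n → α) :
    star (U *ᵥ v) ⬝ᵥ (U *ᵥ v) = star v ⬝ᵥ v := by
  rw [star_mulVec, ← dotProduct_mulVec, mulVec_mulVec, hU, one_mulVec]

theorem isUnitUpperTriangular_fin_two_iff {α : Type*} [CommRing α]
    {M : Matrix (Fin 2) (Fin 2) α} :
    IsUnitUpperTriangular_s11 M ↔ M *ᵥ Pi.single 0 1 = Pi.single 0 1 ∧ M.det = 1 := by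
  have column_zero : M *ᵥ Pi.single 0 1 = Pi.single 0 1 ↔ M 0 0 = 1 ∧ M 1 0 = 0 := by
    simp [funext_iff, Fin.forall_fin_two]
  rw [column_zero, det_fin_two]
  constructor
  · rintro ⟨lower, diag⟩
    simp [lower 1 0 Fin.zero_lt_one, diag]
  · rintro ⟨⟨h00, h10⟩, hdet⟩
    have h11 : M 1 1 = 1 := by simpa [h00, h10] using hdet
    simp [IsUnitUpperTriangular_s11, Fin.forall_fin_two, h00, h10, h11]

variable {α : Type*} [CommRing α] [StarRing α]

/-- The matrix with first column `v` that is unitary of determinant one when `v` is a unit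
vector. -/
def unitaryCompletion (v : Fin 2 → α) : Matrix (Fin 2) (Fin 2) α :=
  !![v 0, -star (v 1); v 1, star (v 0)]

namespace unitaryCompletion

theorem mulVec_single_zero (v : Fin 2 → α) : unitaryCompletion v *ᵥ Pi.single 0 1 = v := by
  simp [unitaryCompletion, funext_iff, Fin.forall_fin_two]

theorem det_eq (v : Fin 2 → α) : (unitaryCompletion v).det = star v ⬝ᵥ v := by
  simp only [unitaryCompletion, det_fin_two_of, dotProduct, Fin.sum_univ_two, Pi.star_apply]
  ring

theorem conjTranspose_mul_self {v : Fin 2 → α} (hv : star v ⬝ᵥ v = 1) :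
    (unitaryCompletion v)ᴴ * unitaryCompletion v = 1 := by
  simp only [dotProduct, Fin.sum_univ_two, Pi.star_apply] at hv
  simp only [unitaryCompletion, one_fin_two, ← Matrix.ext_iff, Fin.forall_fin_two, mul_apply,
    Fin.sum_univ_two, conjTranspose_apply, of_apply, cons_val_zero, cons_val_one, star_neg,
    star_star]
  refine ⟨⟨hv, ?_⟩, ?_, ?_⟩
  · ring
  · ring
  · linear_combination hv

end unitaryCompletion

theorem exists_isUnitUpperTriangular_of_dotProduct_eq_one {T V : Matrix (Fin 2) (Fin 2) α}
    (hT : T.det = 1) (hV : V.det = 1)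
    (hTV : star (T *ᵥ V *ᵥ Pi.single 0 1) ⬝ᵥ (T *ᵥ V *ᵥ Pi.single 0 1) = 1) :
    ∃ U : Matrix (Fin 2) (Fin 2) α, Uᴴ * U = 1 ∧ IsUnitUpperTriangular_s11 (Uᴴ * T * V) := by
  set t := T *ᵥ V *ᵥ Pi.single 0 1 with ht
  have hU := unitaryCompletion.conjTranspose_mul_self hTV
  refine ⟨unitaryCompletion t, hU, isUnitUpperTriangular_fin_two_iff.mpr ⟨?_, ?_⟩⟩
  · calc ((unitaryCompletion t)ᴴ * T * V) *ᵥ Pi.single 0 1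
        = (unitaryCompletion t)ᴴ *ᵥ t := by simp only [ht, mulVec_mulVec, Matrix.mul_assoc]
      _ = (unitaryCompletion t)ᴴ *ᵥ unitaryCompletion t *ᵥ Pi.single 0 1 := by
          rw [unitaryCompletion.mulVec_single_zero]
      _ = Pi.single 0 1 := by rw [mulVec_mulVec, hU, one_mulVec]
  · simp [det_mul, det_conjTranspose, unitaryCompletion.det_eq, hTV, hT, hV]

theorem dotProduct_eq_one_of_isUnitUpperTriangular {T U V : Matrix (Fin 2) (Fin 2) α}
    (hU : Uᴴ * U = 1) (hM : IsUnitUpperTriangular_s11 (Uᴴ * T * V)) :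
    star (T *ᵥ V *ᵥ Pi.single 0 1) ⬝ᵥ (T *ᵥ V *ᵥ Pi.single 0 1) = 1 := by
  have hM₀ := (isUnitUpperTriangular_fin_two_iff.mp hM).1
  have hUT : T *ᵥ V *ᵥ Pi.single 0 1 = U *ᵥ Pi.single 0 1 := by
    calc T *ᵥ V *ᵥ Pi.single 0 1 = (U * Uᴴ * T * V) *ᵥ Pi.single 0 1 := by
          rw [mul_eq_one_comm.mp hU, Matrix.one_mul, mulVec_mulVec]
      _ = U *ᵥ (Uᴴ * T * V) *ᵥ Pi.single 0 1 := by simp only [mulVec_mulVec, Matrix.mul_assoc]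
      _ = U *ᵥ Pi.single 0 1 := by rw [hM₀]
  rw [hUT, star_mulVec_dotProduct_mulVec_self hU]
  simp

theorem hasJointGMD_iff_exists_dotProduct_eq_one {ι : Type*} {T : ι → Matrix (Fin 2) (Fin 2) α}
    (hT : ∀ i, (T i).det = 1) :
    HasJointGMD T ↔
      ∃ v : Fin 2 → α, star v ⬝ᵥ v = 1 ∧ ∀ i, star (T i *ᵥ v) ⬝ᵥ (T i *ᵥ v) = 1 := by
  constructor
  · rintro ⟨V, hV, hTV⟩
    refine ⟨V *ᵥ Pi.single 0 1, ?_, fun i ↦ ?_⟩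
    · rw [star_mulVec_dotProduct_mulVec_self hV]
      simp
    · obtain ⟨U, hU, hM⟩ := hTV i
      exact dotProduct_eq_one_of_isUnitUpperTriangular hU hM
  · rintro ⟨v, hv, hTv⟩
    refine ⟨unitaryCompletion v, unitaryCompletion.conjTranspose_mul_self hv, fun i ↦ ?_⟩
    refine exists_isUnitUpperTriangular_of_dotProduct_eq_one (hT i) ?_ ?_
    · rw [unitaryCompletion.det_eq, hv]
    · rw [unitaryCompletion.mulVec_single_zero, hTv i]

end JointTriangularization

theorem star_dotProduct_self_eq_one_iff {𝕜 n : Type*} [RCLike 𝕜] [Fintype n] (v : n → 𝕜) :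
    star v ⬝ᵥ v = 1 ↔ ∑ i, ‖v i‖ ^ 2 = 1 := by
  simp only [dotProduct, Pi.star_apply, RCLike.star_def, RCLike.conj_mul]
  norm_cast

theorem exists_norm_eq_one_and_norm_add_eq_one_iff (x : ℂ) :
    (∃ c : ℂ, ‖c‖ = 1 ∧ ‖c + x‖ = 1) ↔ ‖x‖ ≤ 2 := by
  constructor
  · rintro ⟨c, hc, hcx⟩
    calc ‖x‖ = ‖c + x - c‖ := by rw [add_sub_cancel_left]
      _ ≤ ‖c + x‖ + ‖c‖ := norm_sub_le _ _
      _ = 2 := by rw [hc, hcx]; norm_num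
  · intro hx
    set h := √(1 - (‖x‖ / 2) ^ 2)
    have hh : h ^ 2 = 1 - (‖x‖ / 2) ^ 2 := Real.sq_sqrt (by nlinarith [norm_nonneg x])
    set e := Complex.exp (x.arg * Complex.I)
    have he : ‖e‖ = 1 := Complex.norm_exp_ofReal_mul_I _
    have polar : x = ‖x‖ * e := (Complex.norm_mul_exp_arg_mul_I x).symm
    -- `c` and `c + x` are mirror images in the line through `0` orthogonal to `x`.
    refine ⟨((-(‖x‖ / 2) : ℝ) + h * Complex.I) * e, ?_, ?_⟩
    · rw [norm_mul, he, Complex.norm_add_mul_I, hh]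
      simp
    · have : ((-(‖x‖ / 2) : ℝ) + h * Complex.I) * e + x = ((‖x‖ / 2 : ℝ) + h * Complex.I) * e := by
        push_cast
        linear_combination polar
      rw [this, norm_mul, he, Complex.norm_add_mul_I, hh]
      simp

theorem norm_eq_norm_of_swapped_weights {𝕜 : Type*} [NormedDivisionRing 𝕜] {b u w : 𝕜}
    (hb : ‖b‖ ≠ 1) (h : ‖b * u‖ ^ 2 + ‖w‖ ^ 2 = ‖u‖ ^ 2 + ‖b * w‖ ^ 2) : ‖u‖ = ‖w‖ := by
  have hb' : ‖b‖ ^ 2 - 1 ≠ 0 := by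
    rwa [sub_ne_zero, Ne, pow_eq_one_iff_of_nonneg (norm_nonneg b) two_ne_zero]
  have hprod : (‖b‖ ^ 2 - 1) * (‖u‖ ^ 2 - ‖w‖ ^ 2) = 0 := by
    rw [norm_mul, norm_mul] at h
    linear_combination h
  have hsq : ‖u‖ ^ 2 = ‖w‖ ^ 2 := sub_eq_zero.mp ((mul_eq_zero.mp hprod).resolve_left hb')
  exact (pow_left_inj₀ (norm_nonneg u) (norm_nonneg w) two_ne_zero).mp hsq

theorem exists_unit_vector_iff_exists_norm_add_eq_one {a b : ℂ} (hab : a * b = 1) (hb : ‖b‖ ≠ 1)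
    (x : ℂ) :
    (∃ v : Fin 2 → ℂ, ‖v 0‖ ^ 2 + ‖v 1‖ ^ 2 = 1 ∧
      ‖a * v 0 + x * v 1‖ ^ 2 + ‖b * v 1‖ ^ 2 = 1 ∧ ‖a * v 0‖ ^ 2 + ‖b * v 1‖ ^ 2 = 1) ↔
      ∃ c : ℂ, ‖c‖ = 1 ∧ ‖c + x‖ = 1 := by
  constructor
  · rintro ⟨v, hv, hxv, hdv⟩
    set u := a * v 0
    have hv₀ : v 0 = b * u := by linear_combination -v 0 * hab
    have huw : ‖u‖ = ‖v 1‖ := norm_eq_norm_of_swapped_weights hb (by rw [← hv₀, hv, hdv])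
    have hw : v 1 ≠ 0 := by
      intro hw
      have hu0 : u = 0 := by simpa [hw] using huw
      simp [hv₀, hu0, hw] at hv
    have hxu : ‖u + x * v 1‖ = ‖u‖ :=
      (pow_left_inj₀ (norm_nonneg _) (norm_nonneg _) two_ne_zero).mp (by linarith)
    refine ⟨u / v 1, ?_, ?_⟩
    · rw [norm_div, huw, div_self (norm_ne_zero_iff.mpr hw)]
    · rw [div_add' _ _ _ hw, norm_div, hxu, huw, div_self (norm_ne_zero_iff.mpr hw)]
  · rintro ⟨c, hc, hcx⟩
    obtain ⟨w, hw⟩ : ∃ w : ℂ, ‖w‖ ^ 2 * (1 + ‖b‖ ^ 2) = 1 := by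
      refine ⟨((√(1 + ‖b‖ ^ 2))⁻¹ : ℝ), ?_⟩
      rw [Complex.norm_real, Real.norm_eq_abs, sq_abs, inv_pow, Real.sq_sqrt (by positivity)]
      exact inv_mul_cancel₀ (by positivity)
    have hu : a * (b * (c * w)) = c * w := by linear_combination c * w * hab
    refine ⟨![b * (c * w), w], ?_⟩
    simp only [cons_val_zero, cons_val_one, hu, ← add_mul, norm_mul, hc, hcx]
    refine ⟨?_, ?_, ?_⟩ <;> linear_combination hw

theorem hasJointGMD_iff_norm_le_two {a b : ℂ} (hab : a * b = 1) (hb : ‖b‖ ≠ 1) (x : ℂ) :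
    HasJointGMD ![!![a, x; 0, b], !![a, 0; 0, b]] ↔ ‖x‖ ≤ 2 := by
  have hdet : ∀ i, (![!![a, x; 0, b], !![a, 0; 0, b]] i).det = 1 := by
    simp [Fin.forall_fin_two, det_fin_two, hab]
  rw [hasJointGMD_iff_exists_dotProduct_eq_one hdet, ← exists_norm_eq_one_and_norm_add_eq_one_iff,
    ← exists_unit_vector_iff_exists_norm_add_eq_one hab hb]
  simp only [star_dotProduct_self_eq_one_iff]
  simp only [Fin.forall_fin_two, Fin.sum_univ_two, mulVec, dotProduct, of_apply, cons_val_zero,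
    cons_val_one, zero_mul, zero_add, add_zero]

theorem one_sub_inv_sq_mul_le_four_iff {y : ℝ} (hy : 0 < y) :
    (1 - y⁻¹) ^ 2 * (1 + y + y ^ 2) ≤ 4 ↔ y ^ 2 - 3 * y + 1 ≤ 0 := by
  have factorization : (1 - y⁻¹) ^ 2 * (1 + y + y ^ 2) - 4 =
      (y ^ 2 - 3 * y + 1) * ((y + 1) / y) ^ 2 := by
    field_simp
    ring
  have hpos : 0 < ((y + 1) / y) ^ 2 := by positivity
  rw [← sub_nonpos, factorization, ← smul_eq_mul, smul_nonpos_iff_nonpos_of_pos_right hpos]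

theorem sq_sub_three_mul_add_one_nonpos_iff {y : ℝ} (hy : 1 ≤ y) :
    y ^ 2 - 3 * y + 1 ≤ 0 ↔ y ≤ (3 + √5) / 2 := by
  have roots : y ^ 2 - 3 * y + 1 = (y - (3 + √5) / 2) * (y - (3 - √5) / 2) := by
    linear_combination (1 / 4 : ℝ) * Real.sq_sqrt (show (0 : ℝ) ≤ 5 by norm_num)
  have hpos : 0 < y - (3 - √5) / 2 := by
    have : 1 < √5 := Real.lt_sqrt_of_sq_lt (by norm_num)
    linarith
  rw [roots, ← smul_eq_mul, smul_nonpos_iff_nonpos_of_pos_right hpos, sub_nonpos]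

theorem abs_one_sub_inv_mul_sqrt_le_two_iff {y : ℝ} (hy : 1 ≤ y) :
    |(1 - y⁻¹) * √(1 + y + y ^ 2)| ≤ 2 ↔ y ≤ (3 + √5) / 2 := by
  rw [← sq_le_sq₀ (abs_nonneg _) zero_le_two, sq_abs, mul_pow, Real.sq_sqrt (by positivity),
    show (2 : ℝ) ^ 2 = 4 by norm_num, one_sub_inv_sq_mul_le_four_iff (by positivity),
    sq_sub_three_mul_add_one_nonpos_iff hy]

/-- Exact 2-GMD for the triangular factors of the three-rate Gaussian rateless
problem at rate `R` exists iff `R ≤ 6 log₂((3 + √5)/2)`. Here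
`x = -(1 - 2^{-R/6}) √(1 + 2^{R/6} + 2^{R/3})`,
`T₁ = !![2^{-R/12}, x; 0, 2^{R/12}]` and `T₂ = diag(2^{-R/12}, 2^{R/12})`. -/
theorem three_rate_perfect_iff (R : ℝ) (hR : 0 < R)
    (x : ℝ)
    (hx : x = -(1 - (2 : ℝ) ^ (-R / 6)) *
      Real.sqrt (1 + (2 : ℝ) ^ (R / 6) + (2 : ℝ) ^ (R / 3))) :
    (∃ U₁ U₂ V : Matrix (Fin 2) (Fin 2) ℂ,
      U₁ᴴ * U₁ = 1 ∧ U₂ᴴ * U₂ = 1 ∧ Vᴴ * V = 1 ∧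
      (∀ k l : Fin 2, l < k →
        (U₁ᴴ * !![(((2 : ℝ) ^ (-R / 12) : ℝ) : ℂ), (x : ℂ);
                  0, (((2 : ℝ) ^ (R / 12) : ℝ) : ℂ)] * V) k l = 0) ∧
      (∀ k : Fin 2,
        (U₁ᴴ * !![(((2 : ℝ) ^ (-R / 12) : ℝ) : ℂ), (x : ℂ);
                  0, (((2 : ℝ) ^ (R / 12) : ℝ) : ℂ)] * V) k k = 1) ∧
      (∀ k l : Fin 2, l < k →
        (U₂ᴴ * !![(((2 : ℝ) ^ (-R / 12) : ℝ) : ℂ), 0;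
                  0, (((2 : ℝ) ^ (R / 12) : ℝ) : ℂ)] * V) k l = 0) ∧
      (∀ k : Fin 2,
        (U₂ᴴ * !![(((2 : ℝ) ^ (-R / 12) : ℝ) : ℂ), 0;
                  0, (((2 : ℝ) ^ (R / 12) : ℝ) : ℂ)] * V) k k = 1)) ↔
    R ≤ 6 * Real.logb 2 ((3 + Real.sqrt 5) / 2) := by
  have hy : 1 ≤ (2 : ℝ) ^ (R / 6) := Real.one_le_rpow one_le_two (by positivity)
  have hb : ‖(((2 : ℝ) ^ (R / 12) : ℝ) : ℂ)‖ ≠ 1 := by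
    rw [Complex.norm_of_nonneg (by positivity)]
    exact (Real.one_lt_rpow one_lt_two (by positivity)).ne'
  have hab : (((2 : ℝ) ^ (-R / 12) : ℝ) : ℂ) * (((2 : ℝ) ^ (R / 12) : ℝ) : ℂ) = 1 := by
    rw [← Complex.ofReal_mul, ← Real.rpow_add two_pos, neg_div, neg_add_cancel, Real.rpow_zero,
      Complex.ofReal_one]
  have hinv : (2 : ℝ) ^ (-R / 6) = ((2 : ℝ) ^ (R / 6))⁻¹ := by
    rw [neg_div, Real.rpow_neg zero_le_two]
  have hsq : (2 : ℝ) ^ (R / 3) = ((2 : ℝ) ^ (R / 6)) ^ 2 := by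
    rw [← Real.rpow_mul_natCast zero_le_two]
    ring_nf
  rw [← hasJointGMD_pair_iff, hasJointGMD_iff_norm_le_two hab hb, Complex.norm_real,
    Real.norm_eq_abs, hx, neg_mul, abs_neg, hinv, hsq, abs_one_sub_inv_mul_sqrt_le_two_iff hy,
    ← Real.le_logb_iff_rpow_le one_lt_two (by positivity), div_le_iff₀' (by norm_num)]
end
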